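/- Let (W, S) be a Coxeter group and {S_i}_{i ∈ A} a family of subsets of S with ⋂_i S_i = ∅. For x ∈ W and T ⊆ S let x^T denote the unique minimal-length element of the coset W_T x. Then for x, y ∈ W, x ≤ y in Bruhat order if and only if x^{S_i} ≤ y^{S_i} for all i ∈ A. -/

import Mathlib

/-!
The proof works with the description of the Bruhat order by chains of reflections. The left
inversions of `w` are the reflections on which a `ZMod 2`-valued cocycle is odd
(`length_lt_iff_invParity`); this yields the strong exchange property, so the chain order agrees
with the subword order (`bruhatLE_iff_chainLE`), and also the lifting property: if `u ≤ v` then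
`u ≤ s v` or `s u ≤ s v`, and `s u ≤ v` or `s u ≤ s v`, and likewise on the right.

If `m` is of minimal length in `W_T m` and `m ≤ v`, lifting gives `m ≤ u v` for all `u ∈ W_T`
(`chainLE_mul_of_minimal`). Hence `x ↦ x^T` is monotone, which is one direction of the theorem.

The converse is by induction on the length of `y`. If `y ≠ 1`, take a right descent `s` of `y` and
let `x'` be the smaller of `x` and `x s`. Then `x'^T ≤ (y s)^T` for each `T` of the family, so
`x' ≤ y s` by induction and `x ≤ y` by lifting. If `y = 1`, then `x` lies in `W_{S_i}` for every
`i`, so a left descent of `x` would have its index in every `S_i`, hence `x = 1`. This last step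
uses that the simple reflections are distinct (`simple_injective`), which comes from the geometric
representation.
-/

/-- The Bruhat order on a Coxeter group, via the subword property: `x ≤ y` iff some reduced
word for `y` admits a subword whose product is `x`. -/
def BruhatLE {B W : Type*} [Group W] {M : CoxeterMatrix B} (cs : CoxeterSystem M W)
    (x y : W) : Prop :=
  ∃ ω : List B, cs.wordProd ω = y ∧ ω.length = cs.length y ∧
    ∃ ω' : List B, ω'.Sublist ω ∧ cs.wordProd ω' = x

/-! ### Distinctness of the simple reflections -/

open Polynomial.Chebyshev in
/-- The two coefficients in Mathlib's formula for the `m`-th power of a product of two reflections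
vanish when the angle between the mirrors is `π / m`. -/
theorem chebyshev_coeff_eq_zero (m : ℕ) (hm : 3 ≤ m) (t : ℝ)
    (ht : t = 2 * Real.cos (2 * (Real.pi / m))) :
    (S ℝ (((m : ℤ) - 2) / 2)).eval t *
      ((S ℝ (((m : ℤ) - 1) / 2)).eval t + (S ℝ (((m : ℤ) - 3) / 2)).eval t) = 0 ∧
    (S ℝ (((m : ℤ) - 1) / 2)).eval t *
      ((S ℝ ((m : ℤ) / 2)).eval t + (S ℝ (((m : ℤ) - 2) / 2)).eval t) = 0 := by
  have hm' : (3 : ℝ) ≤ m := by exact_mod_cast hm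
  have hpi := Real.pi_pos
  set θ := Real.pi / m with hθ
  have hmθ : m * θ = Real.pi := by rw [hθ]; field_simp
  have hθ0 : 0 < θ := by positivity
  have hsin : Real.sin (2 * θ) ≠ 0 := by
    apply ne_of_gt
    apply Real.sin_pos_of_pos_of_lt_pi <;> nlinarith
  have key := fun n : ℤ => S_two_mul_real_cos (2 * θ) n
  rw [← ht] at key
  rcases Nat.even_or_odd' m with ⟨k, rfl | rfl⟩
  · have h : (S ℝ ((k : ℤ) - 1)).eval t = 0 := by
      apply (mul_eq_zero.mp ?_).resolve_right hsin
      rw [key]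
      push_cast at hmθ ⊢
      rw [show ((k : ℝ) - 1 + 1) * (2 * θ) = Real.pi by linarith, Real.sin_pi]
    rw [show ((((2 * k : ℕ) : ℤ) - 2) / 2) = (k : ℤ) - 1 by lia,
      show ((((2 * k : ℕ) : ℤ) - 1) / 2) = (k : ℤ) - 1 by lia, h, zero_mul, zero_mul]
    exact ⟨rfl, rfl⟩
  · have h : (S ℝ (k : ℤ)).eval t + (S ℝ ((k : ℤ) - 1)).eval t = 0 := by
      apply (mul_eq_zero.mp ?_).resolve_right hsin
      rw [add_mul, key, key]
      push_cast at hmθ ⊢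
      rw [show ((k : ℝ) + 1) * (2 * θ) = θ + Real.pi by linarith,
        show ((k : ℝ) - 1 + 1) * (2 * θ) = Real.pi - θ by linarith,
        Real.sin_add_pi, Real.sin_pi_sub]
      ring
    rw [show ((((2 * k + 1 : ℕ) : ℤ) - 1) / 2) = (k : ℤ) by lia,
      show ((((2 * k + 1 : ℕ) : ℤ) - 3) / 2) = (k : ℤ) - 1 by lia,
      show (((2 * k + 1 : ℕ) : ℤ) / 2) = (k : ℤ) by lia,
      show ((((2 * k + 1 : ℕ) : ℤ) - 2) / 2) = (k : ℤ) - 1 by lia, h, mul_zero, mul_zero]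
    exact ⟨rfl, rfl⟩

/-- The coroots of the geometric representation of a Coxeter group on `B →₀ ℝ`, whose simple roots
are the basis vectors: the `i`-th coroot takes the value `-2 cos (π / M i j)` on the `j`-th root.
For `M i j = 0` (infinite order) the convention `π / 0 = 0` gives the usual value `-2`. -/
noncomputable def coroot {B : Type*} (M : CoxeterMatrix B) (i : B) : Module.Dual ℝ (B →₀ ℝ) :=
  Finsupp.linearCombination ℝ fun j => -2 * Real.cos (Real.pi / M i j)

theorem coroot_single {B : Type*} (M : CoxeterMatrix B) (i j : B) :
    coroot M i (Finsupp.single j 1) = -2 * Real.cos (Real.pi / M i j) := by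
  simp [coroot]

theorem coroot_self {B : Type*} (M : CoxeterMatrix B) (i : B) :
    coroot M i (Finsupp.single i 1) = 2 := by
  simp [coroot_single]

/-- The reflections of the geometric representation satisfy the Coxeter relations. -/
theorem geometric_isLiftable {B : Type*} (M : CoxeterMatrix B) :
    M.IsLiftable fun i => Module.reflection (coroot_self M i) := by
  intro i j
  dsimp only
  have hsymm : coroot M j (Finsupp.single i 1) = coroot M i (Finsupp.single j 1) := by
    rw [coroot_single, coroot_single, M.symmetric]
  by_cases hij : i = j
  · subst hij
    rw [M.diagonal, pow_one]
    ext1 v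
    exact Module.involutive_reflection (coroot_self M i) v
  by_cases h0 : M i j = 0
  · rw [h0, pow_zero]
  have h1 := M.off_diagonal i j hij
  -- For `M i j = 2` the Chebyshev coefficients do not vanish, but the roots are orthogonal.
  by_cases h2 : M i j = 2
  · have hz : coroot M i (Finsupp.single j 1) = 0 := by
      rw [coroot_single, h2]; simp
    have hz' := hsymm.trans hz
    rw [h2, pow_two]
    ext1 v
    simp only [LinearEquiv.mul_apply, Module.reflection_apply, map_sub, map_smul, hz, hz',
      coroot_self, LinearEquiv.coe_one, id_eq]
    module
  · apply LinearEquiv.toLinearMap_injective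
    obtain ⟨ha, hb⟩ := chebyshev_coeff_eq_zero (M i j) (by lia)
      (coroot M i (Finsupp.single j 1) * coroot M j (Finsupp.single i 1) - 2) (by
        rw [hsymm, coroot_single, Real.cos_two_mul]
        ring)
    rw [Module.reflection_mul_reflection_pow, ha, hb]
    simp only [zero_smul, add_zero]
    rfl

/-- Distinct indices give distinct simple reflections, since they act differently in the geometric
representation. -/
theorem simple_injective {B W : Type*} [Group W] {M : CoxeterMatrix B}
    (cs : CoxeterSystem M W) : Function.Injective cs.simple := by
  intro i j hij
  by_contra hne
  have h := congrArg (cs.lift ⟨_, geometric_isLiftable M⟩) hij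
  rw [cs.lift_apply_simple, cs.lift_apply_simple] at h
  -- Compare the `i`-th coordinates of the images of the `i`-th simple root: `-1` against `1`.
  have h := DFunLike.congr_fun (DFunLike.congr_fun h (Finsupp.single i 1)) i
  rw [Module.reflection_apply_self, Module.reflection_apply] at h
  simp [hne] at h
  norm_num at h

/-! ### The inversion cocycle and strong exchange -/

section Cocycle

variable {B W : Type*} [Group W] {M : CoxeterMatrix B} (cs : CoxeterSystem M W)

open Classical in
/-- The affine operator on functions `f : W → ZMod 2` attached to a simple reflection `s`:
`f ↦ (t ↦ [t = s] + f (s t s))`. Applied to the parity of the number of occurrences of `t` in the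
left inversion sequence of a word `ω`, it gives the same parity for the word `s ω`. -/
noncomputable def invAct (i : B) : Function.End (W → ZMod 2) := fun f t =>
  (if t = cs.simple i then 1 else 0) + f (cs.simple i * t * cs.simple i)

open Classical in
/-- The affine operator of a word: its translation part is the parity of multiplicities in the left
inversion sequence, its linear part is conjugation by the product of the word. -/
theorem invAct_word (ω : List B) (f : W → ZMod 2) (t : W) :
    (ω.map (invAct cs)).prod f t =
      ((cs.leftInvSeq ω).count t : ZMod 2) + f ((cs.wordProd ω)⁻¹ * t * cs.wordProd ω) := by
  induction ω generalizing t with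
  | nil => simp; rfl
  | cons i ω ih =>
    rw [List.map_cons, List.prod_cons]
    change invAct cs i ((ω.map (invAct cs)).prod f) t = _
    have hc : ((cs.leftInvSeq ω).map (MulAut.conj (cs.simple i))).count t =
        (cs.leftInvSeq ω).count (cs.simple i * t * cs.simple i) := by
      rw [← List.count_map_of_injective (cs.leftInvSeq ω) _
        (MulAut.conj (cs.simple i)).injective (cs.simple i * t * cs.simple i)]
      congr 1
      simp [mul_assoc]
    rw [invAct, ih, CoxeterSystem.leftInvSeq, List.count_cons, hc, cs.wordProd_cons]
    simp only [mul_inv_rev, CoxeterSystem.inv_simple, mul_assoc, beq_iff_eq,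
      eq_comm (a := cs.simple i)]
    push_cast
    ring

/-- The left inversion sequence of a Coxeter relator `(i j) ^ M i j` is a sequence repeated twice,
so every element occurs in it an even number of times. -/
theorem leftInvSeq_relator (i j : B) :
    ∃ l, cs.leftInvSeq (CoxeterSystem.alternatingWord i j (2 * M i j)) = l ++ l := by
  refine ⟨(cs.leftInvSeq (CoxeterSystem.alternatingWord i j (2 * M i j))).take (M i j), ?_⟩
  apply List.ext_getElem
  · simp; lia
  · intro k hk hk'
    simp only [CoxeterSystem.length_leftInvSeq, CoxeterSystem.length_alternatingWord] at hk
    rw [cs.getElem_leftInvSeq_alternatingWord i j _ k hk]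
    rw [List.getElem_append]
    split_ifs with h
    · rw [List.getElem_take, cs.getElem_leftInvSeq_alternatingWord i j _ k hk]
    · simp only [List.length_take, CoxeterSystem.length_leftInvSeq,
        CoxeterSystem.length_alternatingWord, List.getElem_take] at h ⊢
      rw [cs.getElem_leftInvSeq_alternatingWord i j _ _ (by lia),
        cs.prod_alternatingWord_eq_mul_pow, cs.prod_alternatingWord_eq_mul_pow,
        if_neg (by simp), if_neg (by simp)]
      rw [show (2 * k + 1) / 2 = (k - M i j) + M i j by lia,
        show (2 * (k - min (M i j) (2 * M i j)) + 1) / 2 = k - M i j by lia, pow_add,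
        cs.simple_mul_simple_pow', mul_one]

theorem alternatingWord_map_prod {G : Type*} [Monoid G] (f : B → G) (i j : B) (n : ℕ) :
    ((CoxeterSystem.alternatingWord i j (2 * n)).map f).prod = (f i * f j) ^ n := by
  induction n with
  | zero => simp [CoxeterSystem.alternatingWord]
  | succ n ih =>
    rw [show 2 * (n + 1) = 2 * n + 1 + 1 by ring, CoxeterSystem.alternatingWord_succ,
      CoxeterSystem.alternatingWord_succ, pow_succ, ← ih]
    simp

theorem invAct_isLiftable : M.IsLiftable (invAct cs) := by
  classical
  intro i j
  rw [← alternatingWord_map_prod]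
  funext f t
  rw [invAct_word]
  obtain ⟨l, hl⟩ := leftInvSeq_relator cs i j
  have hw : cs.wordProd (CoxeterSystem.alternatingWord i j (2 * M i j)) = 1 := by
    rw [CoxeterSystem.wordProd, alternatingWord_map_prod, cs.simple_mul_simple_pow]
  rw [hl, hw, List.count_append, Nat.cast_add, CharTwo.add_self_eq_zero]
  simp
  rfl

/-- The inversion cocycle: `invParity cs w t` is the parity of the number of occurrences of `t` in
the left inversion sequence of any word for `w` (see `invParity_wordProd`). It is defined as the
image of the zero function under the action of `w` extending `invAct`. -/
noncomputable def invParity (w : W) : W → ZMod 2 := cs.lift ⟨_, invAct_isLiftable cs⟩ w 0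

open Classical in
theorem invParity_wordProd (ω : List B) (t : W) :
    invParity cs (cs.wordProd ω) t = (cs.leftInvSeq ω).count t := by
  have h : cs.lift ⟨_, invAct_isLiftable cs⟩ (cs.wordProd ω) = (ω.map (invAct cs)).prod := by
    rw [CoxeterSystem.wordProd, map_list_prod, List.map_map]
    congr 2
    funext i
    exact cs.lift_apply_simple _ i
  rw [invParity, h, invAct_word]
  simp

theorem invParity_one (t : W) : invParity cs 1 t = 0 := by
  classical
  simpa using invParity_wordProd cs [] t

open Classical in
theorem invParity_simple_mul (i : B) (w t : W) :
    invParity cs (cs.simple i * w) t =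
      (if t = cs.simple i then 1 else 0) + invParity cs w (cs.simple i * t * cs.simple i) := by
  rw [invParity, map_mul, cs.lift_apply_simple]
  rfl

theorem invParity_mul (u v t : W) :
    invParity cs (u * v) t = invParity cs u t + invParity cs v (u⁻¹ * t * u) := by
  classical
  induction u using cs.simple_induction_left generalizing t with
  | one => simp [invParity_one]
  | mul_simple_left u i ih =>
    rw [mul_assoc, invParity_simple_mul, ih, invParity_simple_mul]
    simp only [mul_inv_rev, CoxeterSystem.inv_simple, mul_assoc]
    ring

theorem invParity_reflection {t : W} (ht : cs.IsReflection t) : invParity cs t t = 1 := by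
  classical
  obtain ⟨u, i, rfl⟩ := ht
  have h := invParity_mul cs u u⁻¹ (u * cs.simple i * u⁻¹)
  rw [mul_inv_cancel, invParity_one] at h
  have hs : invParity cs (cs.simple i) (cs.simple i) = 1 := by
    simpa [invParity_one] using invParity_simple_mul cs i 1 (cs.simple i)
  rw [invParity_mul, invParity_mul]
  simp only [mul_inv_rev, mul_assoc, inv_mul_cancel_left, inv_mul_cancel, mul_one,
    CoxeterSystem.inv_simple, CoxeterSystem.simple_mul_simple_cancel_left, hs] at h ⊢
  linear_combination -h

/-- The reflections `t` on which the inversion cocycle of `w` is odd are exactly the left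
inversions of `w`. -/
theorem length_lt_iff_invParity {t : W} (ht : cs.IsReflection t) (w : W) :
    cs.length (t * w) < cs.length w ↔ invParity cs w t = 1 := by
  classical
  have key : ∀ v, invParity cs v t = 1 → cs.length (t * v) < cs.length v := by
    intro v hv
    obtain ⟨ω, hω, rfl⟩ := cs.exists_isReduced v
    refine (cs.isLeftInversion_of_mem_leftInvSeq hω ?_).2
    rw [invParity_wordProd] at hv
    by_contra hn
    rw [List.count_eq_zero_of_not_mem hn] at hv
    simp at hv
  refine ⟨fun h => ?_, key w⟩
  by_contra hn
  have h0 : invParity cs w t = 0 := by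
    generalize invParity cs w t = a at hn
    revert a; decide
  have h1 : invParity cs (t * w) t = 1 := by
    rw [invParity_mul, invParity_reflection cs ht, ht.inv, mul_assoc, ht.mul_self, mul_one, h0,
      add_zero]
  have h2 := key _ h1
  rw [← mul_assoc, ht.mul_self, one_mul] at h2
  exact lt_asymm h h2

/-- The strong exchange property; the word `ω` need not be reduced. -/
theorem strong_exchange {t : W} (ht : cs.IsReflection t) (ω : List B)
    (h : cs.length (t * cs.wordProd ω) < cs.length (cs.wordProd ω)) :
    ∃ k, t * cs.wordProd ω = cs.wordProd (ω.eraseIdx k) := by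
  classical
  rw [length_lt_iff_invParity cs ht, invParity_wordProd] at h
  have hmem : t ∈ cs.leftInvSeq ω := by
    by_contra hn
    rw [List.count_eq_zero_of_not_mem hn] at h
    simp at h
  obtain ⟨k, hk, rfl⟩ := List.mem_iff_getElem.mp hmem
  refine ⟨k, ?_⟩
  rw [← List.getD_eq_getElem _ 1 hk, cs.getD_leftInvSeq_mul_wordProd]

end Cocycle

/-! ### The Bruhat order by chains of reflections -/

section Order

variable {B W : Type*} [Group W] {M : CoxeterMatrix B} (cs : CoxeterSystem M W)

/-- An edge `u → v` of the Bruhat graph: `v = t u` for a reflection `t`, and `ℓ u < ℓ v`. -/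
def BruhatStep (u v : W) : Prop :=
  cs.length u < cs.length v ∧ ∃ t, cs.IsReflection t ∧ v = t * u

/-- The Bruhat order described by chains of reflections: the reflexive transitive closure of
`BruhatStep`. -/
def ChainLE : W → W → Prop := Relation.ReflTransGen (BruhatStep cs)

variable {cs}

theorem ChainLE.trans {x y z : W} (h : ChainLE cs x y) (h' : ChainLE cs y z) : ChainLE cs x z :=
  Relation.ReflTransGen.trans h h'

theorem ChainLE.length_le {x y : W} (h : ChainLE cs x y) : cs.length x ≤ cs.length y := by
  induction h with
  | refl => exact le_rfl
  | tail _ h ih => exact ih.trans h.1.le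

theorem ChainLE.inv {x y : W} (h : ChainLE cs x y) : ChainLE cs x⁻¹ y⁻¹ := by
  refine Relation.ReflTransGen.lift (fun w : W => w⁻¹) ?_ _ _ h
  rintro u _ ⟨hl, t, ht, rfl⟩
  refine ⟨by simpa only [cs.length_inv] using hl, u⁻¹ * t * u, ?_, ?_⟩
  · simpa using ht.conj u⁻¹
  · simp [ht.inv]

variable (cs)

theorem chainLE_simple_mul_or (i : B) (w : W) :
    ChainLE cs w (cs.simple i * w) ∧ cs.length w < cs.length (cs.simple i * w) ∨
    ChainLE cs (cs.simple i * w) w ∧ cs.length (cs.simple i * w) < cs.length w := by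
  rcases (cs.length_simple_mul_ne w i).lt_or_gt with h | h
  · exact .inr ⟨.single ⟨h, _, cs.isReflection_simple i, by simp⟩, h⟩
  · exact .inl ⟨.single ⟨h, _, cs.isReflection_simple i, rfl⟩, h⟩

/-- Left multiplication by a simple reflection `s` preserves every edge `u → v` of the Bruhat graph
other than `u → s u`, because for `t ≠ s` the cocycle of `s v` at `s t s` equals that of `v`
at `t`. -/
theorem BruhatStep.simple_mul {u v : W} (h : BruhatStep cs u v) (i : B) :
    cs.simple i * u = v ∨ BruhatStep cs (cs.simple i * u) (cs.simple i * v) := by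
  classical
  obtain ⟨hl, t, ht, rfl⟩ := h
  by_cases hti : t = cs.simple i
  · exact .inl (by rw [hti])
  right
  have ht' : cs.IsReflection (cs.simple i * t * cs.simple i) := by
    simpa using ht.conj (cs.simple i)
  have hlt : cs.length (t * (t * u)) < cs.length (t * u) := by
    rwa [← mul_assoc, ht.mul_self, one_mul]
  rw [length_lt_iff_invParity cs ht] at hlt
  have hne : cs.simple i * t * cs.simple i ≠ cs.simple i := by
    intro h
    apply hti
    have := congrArg (fun x => cs.simple i * x * cs.simple i) h
    simpa [mul_assoc] using this
  have h' : invParity cs (cs.simple i * (t * u)) (cs.simple i * t * cs.simple i) = 1 := by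
    rw [invParity_simple_mul, if_neg hne, zero_add]
    simpa [mul_assoc] using hlt
  rw [← length_lt_iff_invParity cs ht'] at h'
  refine ⟨?_, _, ht', by simp [mul_assoc]⟩
  have he : cs.simple i * t * cs.simple i * (cs.simple i * (t * u)) = cs.simple i * u := by
    simp only [mul_assoc, CoxeterSystem.simple_mul_simple_cancel_left]
    rw [← mul_assoc t t u, ht.mul_self, one_mul]
  rwa [he] at h'

variable {cs}

/-- Half of the lifting property: if `u ≤ v` then `s u` is below the larger of `v` and `s v`. -/
theorem ChainLE.simple_mul {u v : W} (h : ChainLE cs u v) (i : B) :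
    ChainLE cs (cs.simple i * u) v ∨ ChainLE cs (cs.simple i * u) (cs.simple i * v) := by
  induction h using Relation.ReflTransGen.head_induction_on with
  | refl => exact .inr .refl
  | head h' hc ih =>
    rcases BruhatStep.simple_mul cs h' i with rfl | h
    · exact .inl hc
    · exact ih.imp (.head h) (.head h)

/-- Half of the lifting property: if `u ≤ v` then the smaller of `u` and `s u` is below `s v`. -/
theorem ChainLE.le_simple_mul {u v : W} (h : ChainLE cs u v) (i : B) :
    ChainLE cs u (cs.simple i * v) ∨ ChainLE cs (cs.simple i * u) (cs.simple i * v) := by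
  induction h with
  | refl => exact .inr .refl
  | tail hc h' ih =>
    rcases BruhatStep.simple_mul cs h' i with rfl | h
    · left
      rw [cs.simple_mul_simple_cancel_left]
      exact hc
    · exact ih.imp (.tail · h) (.tail · h)

theorem ChainLE.le_mul_simple {u v : W} (h : ChainLE cs u v) (i : B) :
    ChainLE cs u (v * cs.simple i) ∨ ChainLE cs (u * cs.simple i) (v * cs.simple i) := by
  simpa using (h.inv.le_simple_mul i).imp ChainLE.inv ChainLE.inv

theorem ChainLE.mul_simple {u v : W} (h : ChainLE cs u v) (i : B) :
    ChainLE cs (u * cs.simple i) v ∨ ChainLE cs (u * cs.simple i) (v * cs.simple i) := by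
  simpa using (h.inv.simple_mul i).imp ChainLE.inv ChainLE.inv

theorem chainLE_mul_simple_or (i : B) (w : W) :
    ChainLE cs w (w * cs.simple i) ∨ ChainLE cs (w * cs.simple i) w := by
  have := (chainLE_simple_mul_or cs i w⁻¹).imp (fun h => h.1.inv) (fun h => h.1.inv)
  simpa using this

/-- An element below `y` is the product of a subword of every word for `y`, by repeated strong
exchange. -/
theorem ChainLE.exists_sublist {x y : W} (h : ChainLE cs x y) :
    ∀ ω, cs.wordProd ω = y → ∃ ω' : List B, ω'.Sublist ω ∧ cs.wordProd ω' = x := by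
  induction h with
  | refl => exact fun ω hω => ⟨ω, .refl _, hω⟩
  | @tail u v _ h' ih =>
    rintro ω rfl
    obtain ⟨hl, t, ht, hv⟩ := h'
    have hu : u = t * cs.wordProd ω := by rw [hv, ← mul_assoc, ht.mul_self, one_mul]
    rw [hu] at hl
    obtain ⟨k, hk⟩ := strong_exchange cs ht ω hl
    obtain ⟨ω', hs, hx⟩ := ih (ω.eraseIdx k) (by rw [hu, hk])
    exact ⟨ω', hs.trans (List.eraseIdx_sublist ..), hx⟩

theorem chainLE_of_sublist {ω' ω : List B} (h : ω'.Sublist ω) :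
    cs.IsReduced ω → ChainLE cs (cs.wordProd ω') (cs.wordProd ω) := by
  induction h with
  | slnil => exact fun _ => .refl
  | @cons ω' ω i _ ih =>
    intro hr
    have hω : cs.IsReduced ω := hr.drop 1
    rw [cs.wordProd_cons]
    refine (ih hω).trans ?_
    rcases chainLE_simple_mul_or cs i (cs.wordProd ω) with h | h
    · exact h.1
    · have h1 := hr.eq
      have h2 := hω.eq
      rw [cs.wordProd_cons, List.length_cons] at h1
      lia
  | @cons_cons ω' ω i _ ih =>
    intro hr
    have hω : cs.IsReduced ω := hr.drop 1
    rw [cs.wordProd_cons, cs.wordProd_cons]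
    rcases (ih hω).simple_mul i with h | h
    · refine h.trans ?_
      rcases chainLE_simple_mul_or cs i (cs.wordProd ω) with h | h
      · exact h.1
      · have h1 := hr.eq
        have h2 := hω.eq
        rw [cs.wordProd_cons, List.length_cons] at h1
        lia
    · exact h

theorem bruhatLE_iff_chainLE (x y : W) : BruhatLE cs x y ↔ ChainLE cs x y := by
  constructor
  · rintro ⟨ω, rfl, hr, ω', hs, rfl⟩
    exact chainLE_of_sublist hs hr.symm
  · intro h
    obtain ⟨ω, hr, rfl⟩ := cs.exists_isReduced y
    exact ⟨ω, rfl, hr.symm, h.exists_sublist ω rfl⟩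

theorem one_chainLE (w : W) : ChainLE cs 1 w := by
  obtain ⟨ω, hr, rfl⟩ := cs.exists_isReduced w
  simpa using chainLE_of_sublist (List.nil_sublist ω) hr

end Order

/-! ### Minimal coset representatives -/

section Minimal

variable {B W : Type*} [Group W] {M : CoxeterMatrix B} {cs : CoxeterSystem M W}

/-- A minimal-length representative `m` of `W_T m` that lies below `v` lies below the whole
coset `W_T v`. -/
theorem chainLE_mul_of_minimal {T : Set B} {m v : W}
    (hm : ∀ i ∈ T, cs.length m ≤ cs.length (cs.simple i * m)) (h : ChainLE cs m v)
    {u : W} (hu : u ∈ Subgroup.closure (cs.simple '' T)) : ChainLE cs m (u * v) := by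
  have step : ∀ i ∈ T, ∀ w, ChainLE cs m w → ChainLE cs m (cs.simple i * w) := by
    intro i hi w hw
    rcases hw.le_simple_mul i with h | h
    · exact h
    · rcases chainLE_simple_mul_or cs i m with h' | h'
      · exact h'.1.trans h
      · exact absurd (hm i hi) h'.2.not_ge
  induction hu using Subgroup.closure_induction_left with
  | one => simpa using h
  | mul_left s hs w _ ih =>
    obtain ⟨i, hi, rfl⟩ := hs
    rw [mul_assoc]
    exact step i hi _ ih
  | inv_mul_cancel s hs w _ ih =>
    obtain ⟨i, hi, rfl⟩ := hs
    rw [mul_assoc, cs.inv_simple]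
    exact step i hi _ ih

/-- Every simple reflection below an element of `W_T` is indexed by an element of `T`. -/
theorem mem_of_simple_chainLE {T : Set B} {x : W}
    (hx : x ∈ Subgroup.closure (cs.simple '' T)) (i : B) (h : ChainLE cs (cs.simple i) x) :
    i ∈ T := by
  have step : ∀ j ∈ T, ∀ w, (ChainLE cs (cs.simple i) w → i ∈ T) →
      ChainLE cs (cs.simple i) (cs.simple j * w) → i ∈ T := by
    intro j hj w ih h
    by_cases hij : cs.simple j = cs.simple i
    · rwa [← simple_injective cs hij]
    -- Since `s_j s_i ≠ 1`, multiplying `s_i` by `s_j` increases the length.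
    have hle : ChainLE cs (cs.simple i) (cs.simple j * cs.simple i) := by
      rcases chainLE_simple_mul_or cs j (cs.simple i) with h' | ⟨_, h'⟩
      · exact h'.1
      · rw [cs.length_simple, Nat.lt_one_iff, cs.length_eq_zero_iff] at h'
        exact absurd (by simpa using eq_inv_of_mul_eq_one_left h') hij
    have h' := h.le_simple_mul j
    rw [cs.simple_mul_simple_cancel_left] at h'
    exact ih (h'.elim id hle.trans)
  induction hx using Subgroup.closure_induction_left with
  | one => simpa using h.length_le
  | mul_left s hs w _ ih =>
    obtain ⟨j, hj, rfl⟩ := hs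
    exact step j hj w ih h
  | inv_mul_cancel s hs w _ ih =>
    obtain ⟨j, hj, rfl⟩ := hs
    rw [cs.inv_simple] at h
    exact step j hj w ih h

end Minimal

/-- Deodhar's lemma: let `(W, S)` be a Coxeter system and `{S_i}` a family of subsets of the
generating set with `⋂ S_i = ∅`.  Let `minRep T x` be the element of minimal length in the
coset `W_T x` (here `minRep` is any function satisfying this specification).  Then for
`x, y ∈ W` one has `x ≤ y` in Bruhat order iff `x^{S_i} ≤ y^{S_i}` for all `i`. -/
theorem stmt18 {B W : Type*} [Group W] {M : CoxeterMatrix B} (cs : CoxeterSystem M W)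
    {ι : Type*} (S : ι → Set B) (hS : (⋂ i, S i) = ∅)
    (minRep : Set B → W → W)
    (hmem : ∀ (T : Set B) (x : W),
      ∃ u ∈ Subgroup.closure (cs.simple '' T), minRep T x = u * x)
    (hmin : ∀ (T : Set B) (x : W), ∀ u ∈ Subgroup.closure (cs.simple '' T),
      cs.length (minRep T x) ≤ cs.length (u * x)) :
    ∀ x y : W, BruhatLE cs x y ↔ ∀ i, BruhatLE cs (minRep (S i) x) (minRep (S i) y) := by
  have hms : ∀ T x, ∀ i ∈ T,
      cs.length (minRep T x) ≤ cs.length (cs.simple i * minRep T x) := by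
    intro T x i hi
    obtain ⟨u, hu, hx⟩ := hmem T x
    have h := hmin T x (cs.simple i * u)
      (mul_mem (Subgroup.subset_closure (Set.mem_image_of_mem _ hi)) hu)
    rwa [mul_assoc, ← hx] at h
  have hbelow : ∀ T x v, ChainLE cs (minRep T x) v →
      ∀ u ∈ Subgroup.closure (cs.simple '' T), ChainLE cs (minRep T x) (u * v) :=
    fun T x v h u hu => chainLE_mul_of_minimal (hms T x) h hu
  have hle : ∀ T x, ChainLE cs (minRep T x) x := by
    intro T x
    obtain ⟨u, hu, hx⟩ := hmem T x
    have h := hbelow T x _ .refl u⁻¹ (inv_mem hu)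
    rwa [hx, inv_mul_cancel_left, ← hx] at h
  have hup : ∀ T x v, ChainLE cs (minRep T x) v → ChainLE cs (minRep T x) (minRep T v) := by
    intro T x v h
    obtain ⟨u, hu, hv⟩ := hmem T v
    rw [hv]
    exact hbelow T x v h u hu
  have hmono : ∀ T x y, ChainLE cs x y → ChainLE cs (minRep T x) (minRep T y) :=
    fun T x y h => hup T x y ((hle T x).trans h)
  -- `m s` lies in the coset `W_T x s` when `m` lies in `W_T x`.
  have hmulr : ∀ T x i, ChainLE cs (minRep T (x * cs.simple i)) (minRep T x * cs.simple i) := by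
    intro T x i
    obtain ⟨u, hu, hx⟩ := hmem T x
    rw [hx, mul_assoc]
    exact hbelow T _ _ (hle T _) u hu
  intro x y
  simp only [bruhatLE_iff_chainLE]
  refine ⟨fun h i => hmono (S i) x y h, ?_⟩
  induction hn : cs.length y using Nat.strong_induction_on generalizing x y with
  | _ n IH =>
  intro h
  subst hn
  by_cases hy : y = 1
  · subst hy
    have hx : x = 1 := by
      by_contra hx
      obtain ⟨i, hi⟩ := cs.exists_leftDescent_of_ne_one hx
      have hix : ChainLE cs (cs.simple i) x := by
        have h1 := (one_chainLE (cs := cs) (cs.simple i * x)).simple_mul i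
        rw [mul_one, cs.simple_mul_simple_cancel_left] at h1
        rcases h1 with h1 | h1
        · rcases chainLE_simple_mul_or cs i x with h2 | h2
          · exact absurd hi h2.2.not_gt
          · exact h1.trans h2.1
        · exact h1
      have hall : i ∈ ⋂ k, S k := by
        refine Set.mem_iInter.mpr fun k => mem_of_simple_chainLE ?_ i hix
        have h1 : minRep (S k) x = 1 := by
          have h2 := ((h k).trans (hle (S k) 1)).length_le
          rwa [cs.length_one, Nat.le_zero, cs.length_eq_zero_iff] at h2
        obtain ⟨u, hu, hx'⟩ := hmem (S k) x
        rw [h1] at hx'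
        rw [eq_inv_of_mul_eq_one_right hx'.symm]
        exact inv_mem hu
      rw [hS] at hall
      exact hall
    rw [hx]
    exact .refl
  · obtain ⟨s, hs⟩ := cs.exists_rightDescent_of_ne_one hy
    have hys : ChainLE cs (y * cs.simple s) y := by
      rcases chainLE_mul_simple_or (cs := cs) s y with h' | h'
      · exact absurd hs h'.length_le.not_gt
      · exact h'
    have hmain : ∀ x', ChainLE cs x' x → ChainLE cs x' (x * cs.simple s) →
        ChainLE cs x' (y * cs.simple s) := by
      intro x' h1 h2
      refine IH _ hs x' _ rfl fun k => ?_
      have hx1 : ChainLE cs (minRep (S k) x') (minRep (S k) x) := hmono _ _ _ h1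
      have hx2 : ChainLE cs (minRep (S k) x') (minRep (S k) x * cs.simple s) :=
        (hmono _ _ _ h2).trans (hmulr _ _ _)
      -- `x'^T` is below both `x^T` and `x^T s`, so below `y^T s`, which lies in `W_T y s`.
      have hx3 : ChainLE cs (minRep (S k) x') (minRep (S k) y * cs.simple s) :=
        ((h k).le_mul_simple s).elim hx1.trans hx2.trans
      obtain ⟨u, hu, hyu⟩ := hmem (S k) y
      rw [hyu, mul_assoc] at hx3
      have h3 := hbelow _ _ _ hx3 u⁻¹ (inv_mem hu)
      rw [inv_mul_cancel_left] at h3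
      exact hup _ _ _ h3
    rcases chainLE_mul_simple_or (cs := cs) s x with h' | h'
    · exact (hmain x .refl h').trans hys
    · have h1 := (hmain _ h' .refl).mul_simple s
      rw [cs.simple_mul_simple_cancel_right, cs.simple_mul_simple_cancel_right] at h1
      exact h1.elim (·.trans hys) id
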